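/- Let μ be the Lie bracket on ℝ^7 with nonzero basis brackets [e1,e2]=e3, [e1,e3]=e4, [e1,e5]=e6, [e2,e3]=e5, [e2,e4]=e6, [e2,e5]=e7, [e2,e6]=e7, [e3,e5]=-e7. Then φ = (1/2)·diag(0,1,1,1,2,2,3) is a derivation of (ℝ^7,μ) and φ is pre-Einstein, i.e. trace(φ∘ψ) = trace(ψ) for every derivation ψ of (ℝ^7,μ). -/

import Mathlib

open Finset

noncomputable section

/-- `ℝ⁷` with its standard basis and standard inner product. -/
abbrev V7 : Type := Fin 7 → ℝ

/-- The standard basis vector `e i`. -/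
def e (i : Fin 7) : V7 := Pi.single i 1

/-- The standard inner product on `ℝ⁷`. -/
def dot (x y : V7) : ℝ := ∑ i, x i * y i

/-- Structure constants built from a list of entries `(i, j, k, a)`, each meaning that
`μ (e i) (e j)` has component `a` along `e k` (and `μ (e j) (e i)` has component `-a`);
all unlisted basis brackets are `0`. -/
def toC (L : List (Fin 7 × Fin 7 × Fin 7 × ℝ)) (i j k : Fin 7) : ℝ :=
  (L.map fun t =>
      (if t.1 = i ∧ t.2.1 = j ∧ t.2.2.1 = k then t.2.2.2 else 0)
    - (if t.1 = j ∧ t.2.1 = i ∧ t.2.2.1 = k then t.2.2.2 else 0)).sum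

/-- The bilinear skew-symmetric map on `ℝ⁷` with structure constants `c`. -/
def br (c : Fin 7 → Fin 7 → Fin 7 → ℝ) (x y : V7) : V7 :=
  fun k => ∑ i, ∑ j, x i * y j * c i j k

lemma br_add_left (c : Fin 7 → Fin 7 → Fin 7 → ℝ) (x x' y : V7) :
    br c (x + x') y = br c x y + br c x' y := by
  funext k
  simp only [br, Pi.add_apply, ← Finset.sum_add_distrib]
  exact Finset.sum_congr rfl fun i _ => Finset.sum_congr rfl fun j _ => by ring

lemma br_smul_left (c : Fin 7 → Fin 7 → Fin 7 → ℝ) (r : ℝ) (x y : V7) :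
    br c (r • x) y = r • br c x y := by
  funext k
  simp only [br, Pi.smul_apply, smul_eq_mul, Finset.mul_sum]
  exact Finset.sum_congr rfl fun i _ => Finset.sum_congr rfl fun j _ => by ring

lemma br_add_right (c : Fin 7 → Fin 7 → Fin 7 → ℝ) (x y y' : V7) :
    br c x (y + y') = br c x y + br c x y' := by
  funext k
  simp only [br, Pi.add_apply, ← Finset.sum_add_distrib]
  exact Finset.sum_congr rfl fun i _ => Finset.sum_congr rfl fun j _ => by ring

lemma br_smul_right (c : Fin 7 → Fin 7 → Fin 7 → ℝ) (r : ℝ) (x y : V7) :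
    br c x (r • y) = r • br c x y := by
  funext k
  simp only [br, Pi.smul_apply, smul_eq_mul, Finset.mul_sum]
  exact Finset.sum_congr rfl fun i _ => Finset.sum_congr rfl fun j _ => by ring

lemma br_zero_left (c : Fin 7 → Fin 7 → Fin 7 → ℝ) (y : V7) : br c 0 y = 0 := by
  funext k; simp [br]

lemma br_zero_right (c : Fin 7 → Fin 7 → Fin 7 → ℝ) (x : V7) : br c x 0 = 0 := by
  funext k; simp [br]

/-- The space of derivations of the algebra `(ℝ⁷, br c)`, i.e. the linear maps `D` with
`D (μ x y) = μ (D x) y + μ x (D y)` for all `x, y`, as a submodule of the endomorphisms. -/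
def derivations (c : Fin 7 → Fin 7 → Fin 7 → ℝ) : Submodule ℝ (Module.End ℝ V7) where
  carrier := {D | ∀ x y, D (br c x y) = br c (D x) y + br c x (D y)}
  add_mem' := by
    intro D E hD hE x y
    simp only [LinearMap.add_apply, hD x y, hE x y, br_add_left, br_add_right]
    abel
  zero_mem' := by
    intro x y
    simp [br_zero_left, br_zero_right]
  smul_mem' := by
    intro r D hD x y
    simp only [LinearMap.smul_apply, hD x y, smul_add, br_smul_left, br_smul_right]

/-- The Jacobi identity for the bracket `br c`. -/
def Jacobi (c : Fin 7 → Fin 7 → Fin 7 → ℝ) : Prop :=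
  ∀ x y z : V7, br c (br c x y) z + br c (br c y z) x + br c (br c z x) y = 0

/-- Skew-symmetry of the bracket `br c`. -/
def Skew (c : Fin 7 → Fin 7 → Fin 7 → ℝ) : Prop :=
  ∀ x y : V7, br c x y = - br c y x

/-- The diagonal endomorphism `diag (a 1, …, a 7)` of `ℝ⁷`, `e i ↦ a i • e i`. -/
def diagL (a : Fin 7 → ℝ) : Module.End ℝ V7 :=
  LinearMap.pi fun i => a i • LinearMap.proj i

/-- Structure constants of the bracket with nonzero basis brackets
`[e1,e2]=e3, [e1,e3]=e4, [e1,e5]=e6, [e2,e3]=e5, [e2,e4]=e6, [e2,e5]=e7, [e2,e6]=e7,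
[e3,e5]=-e7`. -/
def c4 : Fin 7 → Fin 7 → Fin 7 → ℝ :=
  toC [(0, 1, 2, (1:ℝ)),
   (0, 2, 3, 1),
   (0, 4, 5, 1),
   (1, 2, 4, 1),
   (1, 3, 5, 1),
   (1, 4, 6, 1),
   (1, 5, 6, 1),
   (2, 4, 6, -1)]

/-!
A diagonal map `diagL w` is a derivation as soon as `w` is additive along the nonzero brackets, as
`w = (0, 1, 1, 1, 2, 2, 3)` is. Conversely, every derivation `ψ` has diagonal `t • w` for some
`t`: comparing the two brackets `[e 1, e 4] = [e 1, e 5] = e 6` forces the `e 0` entry to vanish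
once the off-diagonal entries are eliminated. Hence `trace (r • diagL w ∘ ψ) = t * r * ∑ w i ^ 2`
while `trace ψ = t * ∑ w i`, and these agree for `r = ∑ w i / ∑ w i ^ 2 = 10 / 20`.
-/

lemma br_e (c : Fin 7 → Fin 7 → Fin 7 → ℝ) (i j : Fin 7) : br c (e i) (e j) = c i j := by
  funext k
  simp [br, e, Pi.single_apply]

section StructureConstants

variable {c : Fin 7 → Fin 7 → Fin 7 → ℝ}

lemma skew_of_antisymm (h : ∀ i j k, c i j k = -c j i k) : Skew c := by
  intro x y
  funext k
  simp only [br, Pi.neg_apply, ← sum_neg_distrib]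
  rw [sum_comm]
  refine sum_congr rfl fun j _ ↦ sum_congr rfl fun i _ ↦ ?_
  rw [h i j k]
  ring

lemma toC_antisymm (L : List (Fin 7 × Fin 7 × Fin 7 × ℝ)) (i j k : Fin 7) :
    toC L i j k = -toC L j i k := by
  induction L with
  | nil => simp [toC]
  | cons t L ih =>
    simp only [toC, List.map_cons, List.sum_cons] at ih ⊢
    rw [ih]
    ring

lemma exists_mem_of_toC_ne_zero {L : List (Fin 7 × Fin 7 × Fin 7 × ℝ)} {i j k : Fin 7}
    (h : toC L i j k ≠ 0) :
    ∃ t ∈ L, t.2.2.1 = k ∧ (t.1 = i ∧ t.2.1 = j ∨ t.1 = j ∧ t.2.1 = i) := by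
  contrapose! h
  refine List.sum_eq_zero fun s hs ↦ ?_
  obtain ⟨t, ht, rfl⟩ := List.mem_map.1 hs
  grind

lemma diagL_mem_derivations {a : Fin 7 → ℝ} (h : ∀ i j k, c i j k ≠ 0 → a k = a i + a j) :
    diagL a ∈ derivations c := by
  intro x y
  funext k
  simp only [diagL, br, LinearMap.pi_apply, LinearMap.smul_apply, LinearMap.proj_apply,
    Pi.add_apply, smul_eq_mul, mul_sum, ← sum_add_distrib]
  refine sum_congr rfl fun i _ ↦ sum_congr rfl fun j _ ↦ ?_
  obtain hc | hc := eq_or_ne (c i j k) 0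
  · simp [hc]
  · rw [h i j k hc]
    ring

lemma diagL_mem_derivations_toC {L : List (Fin 7 × Fin 7 × Fin 7 × ℝ)} {a : Fin 7 → ℝ}
    (h : ∀ t ∈ L, a t.2.2.1 = a t.1 + a t.2.1) : diagL a ∈ derivations (toC L) := by
  refine diagL_mem_derivations fun i j k hc ↦ ?_
  obtain ⟨t, ht, rfl, ⟨rfl, rfl⟩ | ⟨rfl, rfl⟩⟩ := exists_mem_of_toC_ne_zero hc
  · exact h t ht
  · rw [h t ht, add_comm]

lemma sum_mul_apply_e_of_mem_derivations {D : Module.End ℝ V7} (hD : D ∈ derivations c)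
    (i j k : Fin 7) :
    ∑ l, c i j l * D (e l) k = ∑ l, D (e i) l * c l j k + ∑ l, D (e j) l * c i l k := by
  have image_bracket : D (c i j) k = ∑ l, c i j l * D (e l) k := by
    have expand : ∑ l, c i j l • e l = c i j := by
      funext m
      simp [e, Pi.single_apply]
    conv_lhs => rw [← expand]
    simp
  rw [← image_bracket, ← br_e c i j, hD]
  simp [br, e, Pi.single_apply]

end StructureConstants

section PreEinstein

lemma trace_eq_sum_apply_single {R ι : Type*} [CommSemiring R] [Fintype ι] [DecidableEq ι]
    (f : Module.End R (ι → R)) : LinearMap.trace R (ι → R) f = ∑ i, f (Pi.single i 1) i := by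
  simp [LinearMap.trace_eq_matrix_trace R (Pi.basisFun R ι), Matrix.trace]

lemma trace_diagL_comp (a : Fin 7 → ℝ) (ψ : Module.End ℝ V7) :
    LinearMap.trace ℝ V7 (diagL a ∘ₗ ψ) = ∑ i, a i * ψ (e i) i := by
  simp [trace_eq_sum_apply_single, diagL, e]

/-- The endomorphism `φ` is a pre-Einstein derivation of the algebra `(ℝ⁷, br c)`; being a
derivation is part of the definition. -/
def IsPreEinstein (c : Fin 7 → Fin 7 → Fin 7 → ℝ) (φ : Module.End ℝ V7) : Prop :=
  φ ∈ derivations c ∧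
    ∀ ψ ∈ derivations c, LinearMap.trace ℝ V7 (φ ∘ₗ ψ) = LinearMap.trace ℝ V7 ψ

lemma isPreEinstein_smul_diagL {c : Fin 7 → Fin 7 → Fin 7 → ℝ} {w : Fin 7 → ℝ} {r : ℝ}
    (hw : diagL w ∈ derivations c)
    (hdiag : ∀ ψ ∈ derivations c, ∃ t : ℝ, ∀ i, ψ (e i) i = t * w i)
    (hr : r * ∑ i, w i ^ 2 = ∑ i, w i) : IsPreEinstein c (r • diagL w) := by
  refine ⟨Submodule.smul_mem _ r hw, fun ψ hψ ↦ ?_⟩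
  obtain ⟨t, ht⟩ := hdiag ψ hψ
  calc LinearMap.trace ℝ V7 ((r • diagL w) ∘ₗ ψ)
      = r * ∑ i, w i * (t * w i) := by
        simp only [LinearMap.smul_comp, map_smul, smul_eq_mul, trace_diagL_comp, ht]
    _ = t * (r * ∑ i, w i ^ 2) := by
        simp only [mul_sum]
        exact sum_congr rfl fun i _ ↦ by ring
    _ = ∑ i, ψ (e i) i := by simp only [hr, ht, mul_sum]
    _ = LinearMap.trace ℝ V7 ψ := (trace_eq_sum_apply_single ψ).symm

end PreEinstein

lemma br_c4 (x y : V7) :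
    br c4 x y = ![0, 0, x 0 * y 1 - x 1 * y 0, x 0 * y 2 - x 2 * y 0, x 1 * y 2 - x 2 * y 1,
      x 0 * y 4 - x 4 * y 0 + x 1 * y 3 - x 3 * y 1,
      x 1 * y 4 - x 4 * y 1 + x 1 * y 5 - x 5 * y 1 - x 2 * y 4 + x 4 * y 2] := by
  funext k
  fin_cases k <;> simp [br, c4, toC, Fin.sum_univ_succ] <;> ring

-- Up to order, `(e 0, e 1, e 2)` and `(e 0, e 1, e 4)` are the only triples of distinct basis
-- vectors with nonzero terms: there `[[e 1, e 2], e 0] = -e 5` cancels `[[e 2, e 0], e 1] = e 5`,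
-- and `[[e 0, e 1], e 4] = -e 6` cancels `[[e 4, e 0], e 1] = e 6`.
lemma jacobi_c4 : Jacobi c4 := by
  intro x y z
  funext k
  fin_cases k <;> simp [br_c4] <;> ring

/-- The degrees of `e 0, …, e 6` in a grading of the Lie algebra `(ℝ⁷, br c4)`. -/
def c4Weight : Fin 7 → ℝ := ![0, 1, 1, 1, 2, 2, 3]

lemma diagL_c4Weight_mem_derivations : diagL c4Weight ∈ derivations c4 := by
  refine diagL_mem_derivations_toC ?_
  simp only [c4Weight, List.forall_mem_cons, Matrix.cons_val]
  norm_num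

lemma diag_eq_mul_c4Weight {ψ : Module.End ℝ V7} (hψ : ψ ∈ derivations c4) (i : Fin 7) :
    ψ (e i) i = ψ (e 1) 1 * c4Weight i := by
  have leibniz := sum_mul_apply_e_of_mem_derivations hψ
  simp only [c4, toC, Fin.sum_univ_seven] at leibniz
  have diag_two : ψ (e 2) 2 = ψ (e 0) 0 + ψ (e 1) 1 := by simpa using leibniz 0 1 2
  have diag_three : ψ (e 3) 3 = ψ (e 0) 0 + ψ (e 2) 2 := by simpa using leibniz 0 2 3
  have diag_four : ψ (e 4) 4 = ψ (e 1) 1 + ψ (e 2) 2 := by simpa using leibniz 1 2 4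
  have diag_five : ψ (e 5) 5 = ψ (e 0) 0 + ψ (e 4) 4 := by simpa using leibniz 0 4 5
  have offdiag_two : ψ (e 2) 3 = ψ (e 1) 2 := by simpa using leibniz 0 1 3
  have offdiag_four : ψ (e 4) 5 = ψ (e 2) 3 := by simpa using leibniz 1 2 5
  have offdiag_five : ψ (e 5) 4 = 0 := by simpa using leibniz 0 4 4
  have diag_six_via_four : ψ (e 6) 6 = ψ (e 1) 1 - ψ (e 1) 2 + (ψ (e 4) 4 + ψ (e 4) 5) := by
    simpa [sub_eq_add_neg] using leibniz 1 4 6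
  have diag_six_via_five : ψ (e 6) 6 = ψ (e 1) 1 + (ψ (e 5) 4 + ψ (e 5) 5) := by
    simpa using leibniz 1 5 6
  have diag_five_eq_diag_four : ψ (e 5) 5 = ψ (e 4) 4 := by linarith
  have diag_zero : ψ (e 0) 0 = 0 := by linarith [diag_five_eq_diag_four]
  fin_cases i <;> simp [c4Weight, diag_zero] <;> linarith

lemma isPreEinstein_c4 : IsPreEinstein c4 ((1 / 2 : ℝ) • diagL c4Weight) := by
  refine isPreEinstein_smul_diagL diagL_c4Weight_mem_derivations
    (fun ψ hψ ↦ ⟨ψ (e 1) 1, diag_eq_mul_c4Weight hψ⟩) ?_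
  simp only [c4Weight, Fin.sum_univ_seven, Matrix.cons_val]
  norm_num

/-- The bracket satisfies the Jacobi identity (and is skew-symmetric), `φ` is a derivation
of it, and `φ` is pre-Einstein: `trace (φ ∘ ψ) = trace ψ` for every derivation `ψ`. -/
theorem stmt :
    Skew c4 ∧ Jacobi c4 ∧
    ((1/2 : ℝ) • diagL ![0, 1, 1, 1, 2, 2, 3]) ∈ derivations c4 ∧
    ∀ ψ ∈ derivations c4,
      LinearMap.trace ℝ V7 (((1/2 : ℝ) • diagL ![0, 1, 1, 1, 2, 2, 3]) ∘ₗ ψ) = LinearMap.trace ℝ V7 ψ :=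
  ⟨skew_of_antisymm (toC_antisymm _), jacobi_c4, isPreEinstein_c4⟩
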